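/- Second fundamental theorem of FC for the general fractional derivative of Riemann–Liouville type: let (κ, k) ∈ L₁ and f ∈ C¹_{-1,(k)}(0,∞). Then for all t > 0, (κ * D_{(k)} f)(t) = f(t) − (k * f)(0) · κ(t), where (k * f)(0) = lim_{s→0+} (k * f)(s). -/

import Mathlib

open Real Filter MeasureTheory intervalIntegral

/-- The Laplace convolution `(f * g)(t) = ∫_0^t f(t-τ) g(τ) dτ`. -/
noncomputable def lconv (f g : ℝ → ℝ) : ℝ → ℝ :=
  fun t => ∫ τ in (0:ℝ)..t, f (t - τ) * g τ

/-- The space `C_{-1}(0,∞)`: functions representable as `t^p f₁(t)` with `p > -1`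
and `f₁` continuous on `[0,∞)`. -/
def CMinusOne (f : ℝ → ℝ) : Prop :=
  ∃ p : ℝ, p > -1 ∧ ∃ f₁ : ℝ → ℝ, ContinuousOn f₁ (Set.Ici 0) ∧
    ∀ t > (0:ℝ), f t = t ^ p * f₁ t


/-- The class `L₁` of Sonin kernel pairs: `κ, k ∈ C_{-1}(0,∞)` with `(κ * k)(t) = 1`
for all `t > 0`. -/
def SoninPair (κ k : ℝ → ℝ) : Prop :=
  CMinusOne κ ∧ CMinusOne k ∧ ∀ t > (0:ℝ), lconv κ k t = 1


lemma CMinusOne.rep {f : ℝ → ℝ} (h : CMinusOne f) : ∃ p : ℝ, p > -1 ∧ ∃ f₁ : ℝ → ℝ,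
    Continuous f₁ ∧ ∀ t > (0:ℝ), f t = t ^ p * f₁ t := by
  obtain ⟨p, hp, f₁, hc, hf⟩ := h
  refine ⟨p, hp, fun x => f₁ (max x 0), ?_, ?_⟩
  · exact hc.comp_continuous (by fun_prop) (fun x => by simp)
  · intro t ht
    simp [hf t ht, max_eq_left ht.le]

lemma CMinusOne.continuousOn {f : ℝ → ℝ} (h : CMinusOne f) : ContinuousOn f (Set.Ioi 0) := by
  obtain ⟨p, hp, f₁, hc, hf⟩ := h.rep
  refine ContinuousOn.congr (f := fun t => t ^ p * f₁ t) ?_ (fun t ht => hf t ht)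
  refine ContinuousOn.mul ?_ hc.continuousOn
  exact continuousOn_id.rpow_const (fun x hx => Or.inl (ne_of_gt hx))

lemma CMinusOne.abs {f : ℝ → ℝ} (h : CMinusOne f) : CMinusOne (fun x => |f x|) := by
  obtain ⟨p, hp, f₁, hc, hf⟩ := h
  refine ⟨p, hp, fun x => |f₁ x|, hc.abs, ?_⟩
  intro t ht
  simp only [hf t ht, abs_mul, abs_of_pos (Real.rpow_pos_of_pos ht p)]

lemma CMinusOne.one : CMinusOne (fun _ => (1:ℝ)) :=
  ⟨0, by norm_num, fun _ => 1, continuousOn_const, by simp⟩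

lemma CMinusOne.intervalIntegrable {f : ℝ → ℝ} (h : CMinusOne f) {t : ℝ} (ht : 0 < t) :
    IntervalIntegrable f volume 0 t := by
  obtain ⟨p, hp, f₁, hc, hf⟩ := h.rep
  have h1 : IntervalIntegrable (fun x => x ^ p * f₁ x) volume 0 t :=
    (intervalIntegral.intervalIntegrable_rpow' hp).mul_continuousOn hc.continuousOn
  refine h1.congr ?_
  intro x hx
  rw [Set.uIoc_of_le ht.le] at hx
  exact (hf x hx.1).symm

lemma beta_ii {p q : ℝ} (hp : p > -1) (hq : q > -1) :
    IntervalIntegrable (fun s : ℝ => (1 - s) ^ p * s ^ q) volume 0 1 := by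
  have left : ∀ {p q : ℝ}, q > -1 →
      IntervalIntegrable (fun s : ℝ => (1 - s) ^ p * s ^ q) volume 0 (1/2) := by
    intro p q hq
    refine (intervalIntegral.intervalIntegrable_rpow' hq).continuousOn_mul ?_
    refine ContinuousOn.rpow_const (by fun_prop) ?_
    intro x hx
    rw [Set.uIcc_of_le (by norm_num)] at hx
    left
    linarith [hx.2]
  refine (left hq).trans ?_
  have := ((left (p := q) hp).comp_sub_left 1).symm
  norm_num at this
  simpa [mul_comm] using this

lemma lconv_integrand {f g : ℝ → ℝ} (hf : CMinusOne f) (hg : CMinusOne g) {t : ℝ} (ht : 0 < t) :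
    IntervalIntegrable (fun τ => f (t - τ) * g τ) volume 0 t := by
  obtain ⟨p, hp, f₁, hfc, hf⟩ := hf.rep
  obtain ⟨q, hq, g₁, hgc, hg⟩ := hg.rep
  have h0 : IntervalIntegrable (fun s : ℝ => ((1 - s) ^ p * s ^ q) *
      (t ^ p * t ^ q * (f₁ (t * (1 - s)) * g₁ (t * s)))) volume 0 1 :=
    (beta_ii hp hq).mul_continuousOn (by fun_prop)
  have h1 := h0.comp_mul_right (c := t⁻¹)
  simp only [zero_div, one_div, inv_inv] at h1
  refine h1.congr_ae ?_
  rw [Set.uIoc_of_le ht.le, ← MeasureTheory.restrict_Ioo_eq_restrict_Ioc]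
  refine (ae_restrict_mem measurableSet_Ioo).mono ?_
  intro x hx
  obtain ⟨hx0, hx1⟩ := hx
  have e1 : t * (1 - x * t⁻¹) = t - x := by field_simp
  have e2 : t * (x * t⁻¹) = x := by field_simp
  have p1 : 0 ≤ 1 - x * t⁻¹ := by
    have : 0 < t - x := by linarith
    rw [← e1] at this
    exact (pos_of_mul_pos_right this ht.le).le
  have p2 : 0 ≤ x * t⁻¹ := by positivity
  simp only []
  rw [hf _ (by linarith), hg x hx0, e1, e2]
  have a1 : (t - x) ^ p = t ^ p * (1 - x * t⁻¹) ^ p := by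
    rw [← Real.mul_rpow ht.le p1, e1]
  have a2 : x ^ q = t ^ q * (x * t⁻¹) ^ q := by
    rw [← Real.mul_rpow ht.le p2, e2]
  rw [a1, a2]
  ring

lemma CMinusOne.lconv {f g : ℝ → ℝ} (hf : CMinusOne f) (hg : CMinusOne g) :
    CMinusOne (lconv f g) := by
  obtain ⟨p, hp, f₁, hfc, hf⟩ := hf.rep
  obtain ⟨q, hq, g₁, hgc, hg⟩ := hg.rep
  refine ⟨p + q + 1, by linarith, fun t => ∫ s in (0:ℝ)..1, ((1 - s) ^ p * s ^ q) *
      (f₁ (t * (1 - s)) * g₁ (t * s)), ?_, ?_⟩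
  · refine Continuous.continuousOn ?_
    rw [continuous_iff_continuousAt]
    intro t₀
    have hcomp : IsCompact ((Set.Icc (t₀ - 1) (t₀ + 1)) ×ˢ (Set.Icc (0:ℝ) 1)) :=
      isCompact_Icc.prod isCompact_Icc
    obtain ⟨C, hC⟩ := hcomp.exists_bound_of_continuousOn
      (f := fun z : ℝ × ℝ => f₁ (z.1 * (1 - z.2)) * g₁ (z.1 * z.2)) (by fun_prop)
    refine intervalIntegral.continuousAt_of_dominated_interval
      (bound := fun s => ‖(1 - s) ^ p * s ^ q‖ * C) ?_ ?_ ?_ ?_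
    · refine Eventually.of_forall fun t => ?_
      have : IntervalIntegrable (fun s : ℝ => ((1 - s) ^ p * s ^ q) *
        (f₁ (t * (1 - s)) * g₁ (t * s))) volume 0 1 :=
        (beta_ii hp hq).mul_continuousOn (by fun_prop)
      rw [Set.uIoc_of_le zero_le_one]
      exact this.1.aestronglyMeasurable
    · filter_upwards [Icc_mem_nhds (show t₀ - 1 < t₀ by linarith) (show t₀ < t₀ + 1 by linarith)]
        with t ht
      refine Eventually.of_forall fun s hs => ?_
      rw [Set.uIoc_of_le zero_le_one] at hs
      rw [norm_mul]
      exact mul_le_mul_of_nonneg_left (hC (t, s) ⟨ht, hs.1.le, hs.2⟩) (norm_nonneg _)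
    · exact (beta_ii hp hq).norm.mul_const C
    · refine Eventually.of_forall fun s hs => ?_
      fun_prop
  · intro t ht
    have e := intervalIntegral.mul_integral_comp_mul_left (a := 0) (b := 1)
      (f := fun τ => f (t - τ) * g τ) t
    simp only [mul_zero, mul_one] at e
    change ∫ τ in (0:ℝ)..t, f (t - τ) * g τ = _
    rw [← e, Real.rpow_add ht, Real.rpow_one, mul_comm (t ^ (p + q)) t, mul_assoc]
    congr 1
    rw [← intervalIntegral.integral_const_mul]
    rw [intervalIntegral.integral_of_le zero_le_one, intervalIntegral.integral_of_le zero_le_one,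
      MeasureTheory.integral_Ioc_eq_integral_Ioo, MeasureTheory.integral_Ioc_eq_integral_Ioo]
    refine setIntegral_congr_fun measurableSet_Ioo ?_
    intro s hs
    obtain ⟨h0, h1⟩ := hs
    have h1' : 0 < 1 - s := by linarith
    have e1 : t - t * s = t * (1 - s) := by ring
    simp only []
    rw [e1, hf _ (by positivity), hg _ (by positivity), Real.mul_rpow ht.le h1'.le,
      Real.mul_rpow ht.le h0.le, Real.rpow_add ht]
    ring

lemma CMinusOne.aesm {f : ℝ → ℝ} (h : CMinusOne f) :
    AEStronglyMeasurable (Set.indicator (Set.Ioi 0) f) volume :=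
  (aestronglyMeasurable_indicator_iff measurableSet_Ioi).2
    (h.continuousOn.aestronglyMeasurable measurableSet_Ioi)

lemma ind_lconv (f g : ℝ → ℝ) : Set.indicator (Set.Ioi 0) (lconv f g) =
    convolution (Set.indicator (Set.Ioi 0) g) (Set.indicator (Set.Ioi 0) f)
      (ContinuousLinearMap.mul ℝ ℝ) volume := by
  refine Eq.trans ?_ (posConvolution_eq_convolution_indicator g f
    (ContinuousLinearMap.mul ℝ ℝ) volume)
  unfold posConvolution lconv
  simp only [ContinuousLinearMap.mul_apply', mul_comm]

lemma conv_exists {f g : ℝ → ℝ} (hf : CMinusOne f) (hg : CMinusOne g) (x : ℝ) :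
    ConvolutionExistsAt (Set.indicator (Set.Ioi 0) g) (Set.indicator (Set.Ioi 0) f) x
      (ContinuousLinearMap.mul ℝ ℝ) volume := by
  have key : (fun t => ContinuousLinearMap.mul ℝ ℝ (Set.indicator (Set.Ioi 0) g t)
      (Set.indicator (Set.Ioi 0) f (x - t))) =
      Set.indicator (Set.Ioo 0 x) (fun τ => f (x - τ) * g τ) := by
    funext t
    simp only [Set.indicator_apply, Set.mem_Ioi, Set.mem_Ioo, ContinuousLinearMap.mul_apply',
      sub_pos]
    by_cases h0 : 0 < t <;> by_cases h1 : t < x <;> simp [h0, h1, mul_comm]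
  unfold ConvolutionExistsAt
  rw [key]
  rcases le_or_gt x 0 with hx | hx
  · simp [Set.Ioo_eq_empty (not_lt.2 hx)]
  · rw [integrable_indicator_iff measurableSet_Ioo, ← integrableOn_Ioc_iff_integrableOn_Ioo]
    exact (intervalIntegrable_iff_integrableOn_Ioc_of_le hx.le).1 (lconv_integrand hf hg hx)

lemma norm_ind (f : ℝ → ℝ) : (fun x => ‖Set.indicator (Set.Ioi 0) f x‖) =
    Set.indicator (Set.Ioi 0) (fun x => |f x|) := by
  funext x
  by_cases h : 0 < x <;> simp [h]

lemma ind_congr {f g : ℝ → ℝ} (h : ∀ t > 0, f t = g t) : Set.indicator (Set.Ioi 0) f =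
    Set.indicator (Set.Ioi 0) g :=
  Set.indicator_congr (fun t ht => h t ht)

lemma lconv_congr {f f' g g' : ℝ → ℝ} (h : ∀ t > 0, f t = f' t) (h' : ∀ t > 0, g t = g' t) :
    ∀ t > 0, lconv f g t = lconv f' g' t := by
  intro t ht
  have := congrFun (ind_lconv f g) t
  rw [ind_congr h, ind_congr h', ← ind_lconv] at this
  simpa [Set.indicator_apply, ht] using this

lemma lconv_assoc {f g h : ℝ → ℝ} (hf : CMinusOne f) (hg : CMinusOne g) (hh : CMinusOne h) :
    ∀ t > 0, lconv f (lconv g h) t = lconv (lconv f g) h t := by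
  intro t ht
  have := convolution_assoc (ContinuousLinearMap.mul ℝ ℝ) (ContinuousLinearMap.mul ℝ ℝ)
    (ContinuousLinearMap.mul ℝ ℝ) (ContinuousLinearMap.mul ℝ ℝ)
    (fun x y z => by simp [mul_assoc]) (x₀ := t) hh.aesm hg.aesm hf.aesm
    (Eventually.of_forall (conv_exists hg hh))
    (Eventually.of_forall (by
      rw [norm_ind, norm_ind]; exact conv_exists hf.abs hg.abs))
    (by
      rw [norm_ind, norm_ind, norm_ind, ← ind_lconv]
      exact conv_exists (hf.abs.lconv hg.abs) hh.abs _)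
  rw [← ind_lconv, ← ind_lconv, ← ind_lconv, ← ind_lconv] at this
  simpa [Set.indicator_apply, ht] using this

lemma lconv_comm (f g : ℝ → ℝ) (t : ℝ) : lconv f g t = lconv g f t := by
  unfold lconv
  have := intervalIntegral.integral_comp_sub_left (a := 0) (b := t)
    (fun τ => g (t - τ) * f τ) t
  simp only [sub_self, sub_zero, sub_sub_cancel] at this
  rw [← this]
  simp only [mul_comm]

lemma lconv_one (f : ℝ → ℝ) (t : ℝ) : lconv (fun _ => 1) f t = ∫ s in (0:ℝ)..t, f s := by
  simp [lconv]

/-- Second fundamental theorem of FC for the GFD of Riemann–Liouville type: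
for `(κ, k) ∈ L₁` and `f ∈ C¹_{-1,(k)}(0,∞)` (i.e. `f ∈ C_{-1}(0,∞)`, `k * f` is
differentiable on `(0,∞)` with a finite limit `c = (k * f)(0)` at `0+` and
`d/dt (k * f) ∈ C_{-1}(0,∞)`), one has
`(κ * D_{(k)} f)(t) = f(t) − (k * f)(0) κ(t)` for all `t > 0`. -/
theorem second_fundamental_theorem_RL (κ k f : ℝ → ℝ) (c : ℝ) (hκk : SoninPair κ k)
    (hf : CMinusOne f) (hdiff : ∀ t > (0:ℝ), DifferentiableAt ℝ (lconv k f) t)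
    (hlim : Tendsto (lconv k f) (nhdsWithin 0 (Set.Ioi 0)) (nhds c))
    (hder : CMinusOne (deriv (lconv k f))) :
    ∀ t > (0:ℝ), lconv κ (deriv (lconv k f)) t = f t - c * κ t := by
  obtain ⟨hκ, hk, hS⟩ := hκk
  set φ := deriv (lconv k f) with hφ
  have hg : ∀ t > 0, lconv k f t = c + lconv (fun _ => 1) φ t := by
    intro t ht
    rw [lconv_one, intervalIntegral.integral_eq_sub_of_hasDerivAt_of_tendsto ht
      (fun x hx => (hdiff x hx.1).hasDerivAt) (hder.intervalIntegrable ht) hlim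
      ((hdiff t ht).continuousAt.tendsto.mono_left nhdsWithin_le_nhds)]
    ring
  have hκφ : CMinusOne (lconv κ φ) := hκ.lconv hder
  have main : ∀ t > 0, ∫ s in (0:ℝ)..t, (f s - (c * κ s + lconv κ φ s)) = 0 := by
    intro t ht
    have e1 : lconv κ (lconv k f) t = ∫ s in (0:ℝ)..t, f s := by
      rw [lconv_assoc hκ hk hf t ht, ← lconv_one]
      exact lconv_congr hS (fun _ _ => rfl) t ht
    have e2 : lconv κ (lconv k f) t = lconv κ (fun s => c + lconv (fun _ => 1) φ s) t :=
      lconv_congr (fun _ _ => rfl) hg t ht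
    have e3 : lconv κ (fun s => c + lconv (fun _ => 1) φ s) t =
        c * lconv κ (fun _ => 1) t + lconv κ (lconv (fun _ => 1) φ) t := by
      have i1 := lconv_integrand hκ CMinusOne.one ht
      have i2 := lconv_integrand hκ (CMinusOne.one.lconv hder) ht
      have := intervalIntegral.integral_add (i1.const_mul c) i2
      rw [intervalIntegral.integral_const_mul] at this
      refine Eq.trans ?_ this
      unfold lconv
      refine intervalIntegral.integral_congr fun x _ => ?_
      ring
    have e4 : lconv κ (lconv (fun _ => 1) φ) t = ∫ s in (0:ℝ)..t, lconv κ φ s := by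
      rw [lconv_assoc hκ CMinusOne.one hder t ht, ← lconv_one,
        lconv_assoc CMinusOne.one hκ hder t ht]
      exact lconv_congr (fun s _ => lconv_comm _ _ s) (fun _ _ => rfl) t ht
    have i1 := hf.intervalIntegrable ht
    have i2 := (hκ.intervalIntegrable ht).const_mul c
    have i3 := hκφ.intervalIntegrable ht
    rw [intervalIntegral.integral_sub i1 (i2.add i3), intervalIntegral.integral_add i2 i3,
      intervalIntegral.integral_const_mul, ← e1, e2, e3, e4, lconv_comm κ, lconv_one]
    ring
  intro t ht
  have hcont : ContinuousOn (fun s => f s - (c * κ s + lconv κ φ s)) (Set.Ioi 0) :=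
    hf.continuousOn.sub ((continuousOn_const.mul hκ.continuousOn).add hκφ.continuousOn)
  have hii : IntervalIntegrable (fun s => f s - (c * κ s + lconv κ φ s)) volume 0 t :=
    (hf.intervalIntegrable ht).sub
      (((hκ.intervalIntegrable ht).const_mul c).add (hκφ.intervalIntegrable ht))
  have hd := intervalIntegral.integral_hasDerivAt_right hii
    (hcont.stronglyMeasurableAtFilter isOpen_Ioi t ht) (hcont.continuousAt (Ioi_mem_nhds ht))
  have hd0 : HasDerivAt (fun u => ∫ s in (0:ℝ)..u, (f s - (c * κ s + lconv κ φ s))) 0 t := by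
    refine (hasDerivAt_const t (0:ℝ)).congr_of_eventuallyEq ?_
    filter_upwards [Ioi_mem_nhds ht] with u hu
    exact main u hu
  have := hd.unique hd0
  linarith
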